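/- arXiv:2506.10266 — 2 statements merged into one kernel-verified Lean document; each statement's English description precedes it below -/
import Mathlib

section
/- Let D be a non-trivial quasi-symmetric 2-(v,k,λ) design with block intersection numbers x = 0 and y ≥ 2, with replication number r and b blocks. Then b ≤ v(v−1)/k, r ≤ v−1, and y < λ ≤ k−1. -/
/-!
Counting incidences between blocks gives everything except one bound from linear algebra. Write
`r` for the number of blocks through a point `p`.

For a block `B` through `p`, counting the pairs `(q, C)` with `q ∈ B ∩ C`, `q ≠ p`, `C ≠ B` and
`p ∈ C` gives `(k - 1) (λ - 1) = (r - 1) (y - 1)`. For a block `C` disjoint from `B`, counting the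
points of `C` on the blocks through `p` gives `k λ ≤ (r - 1) y`, because `B` contributes nothing.
Eliminating `r - 1` leaves `k λ (y - 1) ≤ (k - 1) (λ - 1) y`, which fails for `λ ≤ y`.

Deleting `p` from the blocks through it leaves sets that meet pairwise in `y - 1` of the remaining
`v - 1` points, so Fisher's inequality gives `r ≤ v - 1`. The counts `r (k - 1) = (v - 1) λ` and
`∑ r = b k` turn this into `λ ≤ k - 1` and `b k ≤ v (v - 1)`.
-/

/-- A 2-(v,k,λ) design on a finite point set `P`: a collection of `k`-element
subsets of `P` (blocks) such that every pair of distinct points lies in exactly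
`lam` blocks (with `lam ≥ 1`). -/
structure TwoDesign (P : Type*) [Fintype P] [DecidableEq P] (v k lam : ℕ) where
  blocks : Finset (Finset P)
  card_points : Fintype.card P = v
  block_card : ∀ B ∈ blocks, B.card = k
  lam_pos : 0 < lam
  pair_blocks : ∀ p q : P, p ≠ q →
    (blocks.filter fun B => p ∈ B ∧ q ∈ B).card = lam

/-- A family of blocks is quasi-symmetric with block intersection numbers
`0` and `y` if any two distinct blocks meet in either `0` or `y` points,
and both intersection sizes actually occur. -/
def QuasiSymmetricZero {P : Type*} [DecidableEq P]
    (blocks : Finset (Finset P)) (y : ℕ) : Prop :=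
  (∀ B₁ ∈ blocks, ∀ B₂ ∈ blocks, B₁ ≠ B₂ →
    (B₁ ∩ B₂).card = 0 ∨ (B₁ ∩ B₂).card = y) ∧
  (∃ B₁ ∈ blocks, ∃ B₂ ∈ blocks, B₁ ≠ B₂ ∧ (B₁ ∩ B₂).card = 0) ∧
  (∃ B₁ ∈ blocks, ∃ B₂ ∈ blocks, B₁ ≠ B₂ ∧ (B₁ ∩ B₂).card = y)

section Fisher

open Finset Matrix

variable {ι α : Type*} [DecidableEq α]

/-- The `0`-`1` incidence matrix of the family `A` of finite sets, with rows indexed by the family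
and columns only by the points of `t`; its row space is what Fisher's inequality measures. -/
def incidenceMatrix (A : ι → Finset α) (t : Finset α) : Matrix ι t ℝ :=
  .of fun i q => if (q : α) ∈ A i then 1 else 0

theorem incidenceMatrix_mul_transpose_apply {A : ι → Finset α} {t : Finset α} {i : ι}
    (hi : A i ⊆ t) (j : ι) :
    (incidenceMatrix A t * (incidenceMatrix A t)ᵀ) i j = #(A i ∩ A j) := by
  have hinter : {q ∈ t | q ∈ A i ∧ q ∈ A j} = A i ∩ A j := by grind
  simp only [incidenceMatrix, mul_apply, transpose_apply, of_apply, ← ite_and, ite_mul, one_mul,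
    zero_mul, sum_coe_sort t fun q => if q ∈ A i ∧ q ∈ A j then (1 : ℝ) else 0, sum_boole, hinter]

theorem incidenceMatrix_mul_transpose_eq [DecidableEq ι] {A : ι → Finset α} {t : Finset α} {c : ℕ}
    (hA : ∀ i, A i ⊆ t) (hI : Pairwise fun i j => #(A i ∩ A j) = c) :
    incidenceMatrix A t * (incidenceMatrix A t)ᵀ =
      diagonal (fun i => (#(A i) - c : ℝ)) + (c : ℝ) • vecMulVec 1 (star 1) := by
  ext i j
  rw [incidenceMatrix_mul_transpose_apply (hA i)]
  obtain rfl | hij := eq_or_ne i j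
  · simp
  · simp [hij, hI hij]

/-- **Fisher's inequality**, in its nonuniform form. -/
theorem card_le_card_of_pairwise_card_inter_eq [Fintype ι] {A : ι → Finset α} {t : Finset α}
    {c : ℕ} (hA : ∀ i, A i ⊆ t) (hc : ∀ i, c < #(A i))
    (hI : Pairwise fun i j => #(A i ∩ A j) = c) :
    Fintype.card ι ≤ #t := by
  classical
  have hpos : (incidenceMatrix A t * (incidenceMatrix A t)ᵀ).PosDef := by
    rw [incidenceMatrix_mul_transpose_eq hA hI]
    exact (PosDef.diagonal fun i => sub_pos.2 (Nat.cast_lt.2 (hc i))).add_posSemidef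
      ((posSemidef_vecMulVec_self_star 1).smul c.cast_nonneg)
  calc Fintype.card ι = (incidenceMatrix A t * (incidenceMatrix A t)ᵀ).rank :=
        (rank_of_isUnit _ hpos.isUnit).symm
    _ ≤ (incidenceMatrix A t).rank := rank_mul_le_left _ _
    _ ≤ #t := (rank_le_card_width _).trans_eq (Fintype.card_coe t)

theorem card_le_card_sub_one_of_pairwise_card_inter_eq [Fintype ι] [Fintype α] {A : ι → Finset α}
    {c : ℕ} {p : α} (hp : ∀ i, p ∈ A i) (hc₀ : 0 < c) (hc : ∀ i, c < #(A i))
    (hI : Pairwise fun i j => #(A i ∩ A j) = c) :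
    Fintype.card ι ≤ Fintype.card α - 1 := by
  rw [← card_univ (α := α), ← card_erase_of_mem (mem_univ p)]
  have h_lt (i : ι) : c - 1 < #((A i).erase p) := by
    rw [card_erase_of_mem (hp i)]
    exact Nat.sub_lt_sub_right hc₀ (hc i)
  have h_inter : Pairwise fun i j => #((A i).erase p ∩ (A j).erase p) = c - 1 := by
    intro i j hij
    simp only [erase_inter, inter_erase, erase_idem]
    rw [card_erase_of_mem (mem_inter.2 ⟨hp i, hp j⟩), hI hij]
  exact card_le_card_of_pairwise_card_inter_eq (fun i => erase_subset_erase p (subset_univ _))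
    h_lt h_inter

end Fisher

theorem lt_of_mul_le_of_pred_mul_pred_eq {R : Type*} [CommRing R] [LinearOrder R]
    [IsStrictOrderedRing R] {k l m y : R} (hk : 0 < k) (hl : 1 ≤ l) (hy : 1 < y)
    (h_eq : (k - 1) * (l - 1) = m * (y - 1)) (h_le : k * l ≤ m * y) : y < l := by
  by_contra! hly
  have hy₀ : 0 < y := zero_lt_one.trans hy
  have h_elim : k * l * (y - 1) ≤ (k - 1) * (l - 1) * y := by
    calc k * l * (y - 1) ≤ m * y * (y - 1) := mul_le_mul_of_nonneg_right h_le (by linarith)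
      _ = (k - 1) * (l - 1) * y := by rw [h_eq]; ring
  have h_sum : k * (y - l) + y * (l - 1) ≤ 0 := by linarith
  have h_fst : 0 ≤ k * (y - l) := mul_nonneg hk.le (sub_nonneg.2 hly)
  have h_snd : 0 ≤ y * (l - 1) := mul_nonneg hy₀.le (sub_nonneg.2 hl)
  have hyl : k * (y - l) ≤ 0 := (le_add_of_nonneg_right h_snd).trans h_sum
  have hl₁ : y * (l - 1) ≤ 0 := (le_add_of_nonneg_left h_fst).trans h_sum
  have hy₁ : y ≤ 1 := (sub_nonpos.1 (nonpos_of_mul_nonpos_right hyl hk)).trans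
    (sub_nonpos.1 (nonpos_of_mul_nonpos_right hl₁ hy₀))
  exact hy.not_ge hy₁

namespace QuasiSymmetricZero

open Finset

variable {P : Type*} [DecidableEq P] {blocks : Finset (Finset P)} {B C : Finset P} {p : P} {y : ℕ}

theorem card_inter_le (h : QuasiSymmetricZero blocks y) (hB : B ∈ blocks) (hC : C ∈ blocks)
    (hne : B ≠ C) : #(B ∩ C) ≤ y := by
  obtain h0 | hy := h.1 B hB C hC hne
  · exact h0.trans_le y.zero_le
  · exact hy.le

theorem card_inter_eq (h : QuasiSymmetricZero blocks y) (hB : B ∈ blocks) (hC : C ∈ blocks)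
    (hne : B ≠ C) (hpB : p ∈ B) (hpC : p ∈ C) : #(B ∩ C) = y :=
  (h.1 B hB C hC hne).resolve_left (card_ne_zero_of_mem (mem_inter.2 ⟨hpB, hpC⟩))

theorem exists_disjoint (h : QuasiSymmetricZero blocks y) :
    ∃ B ∈ blocks, ∃ C ∈ blocks, Disjoint B C := by
  obtain ⟨-, ⟨B, hB, C, hC, -, h0⟩, -⟩ := h
  exact ⟨B, hB, C, hC, disjoint_iff_inter_eq_empty.2 (card_eq_zero.1 h0)⟩

theorem lt_of_card_eq {k : ℕ} (h : QuasiSymmetricZero blocks y) (hk : ∀ B ∈ blocks, #B = k) :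
    y < k := by
  obtain ⟨-, -, B, hB, C, hC, hne, rfl⟩ := h
  refine (card_le_card inter_subset_left).trans_eq (hk B hB) |>.lt_of_ne fun hcard => hne ?_
  have hBC : B ⊆ C := inter_eq_left.1 <|
    eq_of_subset_of_card_le inter_subset_left (by rw [hk B hB, hcard])
  exact eq_of_subset_of_card_le hBC (by rw [hk B hB, hk C hC])

end QuasiSymmetricZero

namespace TwoDesign

open Finset

variable {P : Type*} [Fintype P] [DecidableEq P] {v k lam y : ℕ} (D : TwoDesign P v k lam)
  {B C : Finset P} {p : P}

/-- The blocks of `D` containing the point `p`; their number is the replication number. -/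
def blocksThrough (p : P) : Finset (Finset P) := {B ∈ D.blocks | p ∈ B}

@[simp]
theorem mem_blocksThrough : B ∈ D.blocksThrough p ↔ B ∈ D.blocks ∧ p ∈ B := mem_filter

theorem card_filter_mem_blocksThrough {q : P} (hpq : p ≠ q) :
    #{B ∈ D.blocksThrough p | q ∈ B} = lam := by
  rw [blocksThrough, filter_filter]
  exact D.pair_blocks p q hpq

theorem sum_card_blocksThrough : ∑ p, #(D.blocksThrough p) = #D.blocks * k :=
  calc ∑ p, #(D.blocksThrough p) = ∑ B ∈ D.blocks, #B := by
        simpa only [blocksThrough, bipartiteAbove, bipartiteBelow, filter_univ_mem] using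
          sum_card_bipartiteAbove_eq_sum_card_bipartiteBelow (s := univ) (t := D.blocks)
            fun (p : P) B => p ∈ B
    _ = #D.blocks * k := sum_const_nat D.block_card

theorem sum_card_inter_blocksThrough {s : Finset P} (hp : p ∉ s) :
    ∑ B ∈ D.blocksThrough p, #(s ∩ B) = #s * lam :=
  sum_card_inter fun _ hq => D.card_filter_mem_blocksThrough (ne_of_mem_of_not_mem hq hp).symm

theorem card_blocksThrough_mul_pred (p : P) : #(D.blocksThrough p) * (k - 1) = (v - 1) * lam := by
  have h_count := D.sum_card_inter_blocksThrough (notMem_erase p univ)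
  rw [card_erase_of_mem (mem_univ p), card_univ, D.card_points] at h_count
  rw [← h_count]
  refine (sum_const_nat fun B hB => ?_).symm
  obtain ⟨hB, hpB⟩ := D.mem_blocksThrough.1 hB
  rw [erase_inter, univ_inter, card_erase_of_mem hpB, D.block_card B hB]

theorem card_blocks_mul_le {n : ℕ} (h : ∀ p, #(D.blocksThrough p) ≤ n) :
    #D.blocks * k ≤ v * n :=
  calc #D.blocks * k = ∑ p, #(D.blocksThrough p) := D.sum_card_blocksThrough.symm
    _ ≤ Fintype.card P * n := sum_le_card_nsmul univ _ n fun p _ => h p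
    _ = v * n := by rw [D.card_points]

theorem lam_le_pred (hv : 1 < v) (h : #(D.blocksThrough p) ≤ v - 1) : lam ≤ k - 1 := by
  refine Nat.le_of_mul_le_mul_left ?_ (Nat.sub_pos_of_lt hv)
  rw [← D.card_blocksThrough_mul_pred p]
  exact Nat.mul_le_mul_right _ h

theorem card_blocksThrough_le (h : QuasiSymmetricZero D.blocks y) (hy : 0 < y) (p : P) :
    #(D.blocksThrough p) ≤ v - 1 := by
  have hmem (B : D.blocksThrough p) := D.mem_blocksThrough.1 B.2
  have h_lt (B : D.blocksThrough p) : y < #B.1 :=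
    (h.lt_of_card_eq D.block_card).trans_eq (D.block_card B (hmem B).1).symm
  have h_inter : Pairwise fun B C : D.blocksThrough p => #(B.1 ∩ C.1) = y := fun B C hne =>
    h.card_inter_eq (hmem B).1 (hmem C).1 (Subtype.coe_ne_coe.2 hne) (hmem B).2 (hmem C).2
  have h_fisher := card_le_card_sub_one_of_pairwise_card_inter_eq (fun B => (hmem B).2) hy h_lt
    h_inter
  rwa [Fintype.card_coe, D.card_points] at h_fisher

theorem pred_mul_pred_eq (h : QuasiSymmetricZero D.blocks y) (hB : B ∈ D.blocks) (hp : p ∈ B) :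
    (k - 1) * (lam - 1) = (#(D.blocksThrough p) - 1) * (y - 1) := by
  have hBp : B ∈ D.blocksThrough p := D.mem_blocksThrough.2 ⟨hB, hp⟩
  have h_point : ∀ q ∈ B.erase p, #{C ∈ (D.blocksThrough p).erase B | q ∈ C} = lam - 1 := by
    intro q hq
    obtain ⟨hqp, hqB⟩ := mem_erase.1 hq
    rw [filter_erase, card_erase_of_mem (mem_filter.2 ⟨hBp, hqB⟩),
      D.card_filter_mem_blocksThrough hqp.symm]
  have h_block : ∀ C ∈ (D.blocksThrough p).erase B, #(B.erase p ∩ C) = y - 1 := by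
    intro C hC
    obtain ⟨hne, hC⟩ := mem_erase.1 hC
    obtain ⟨hC, hpC⟩ := D.mem_blocksThrough.1 hC
    rw [erase_inter, card_erase_of_mem (mem_inter.2 ⟨hp, hpC⟩),
      h.card_inter_eq hB hC hne.symm hp hpC]
  calc (k - 1) * (lam - 1) = #(B.erase p) * (lam - 1) := by
        rw [card_erase_of_mem hp, D.block_card B hB]
    _ = ∑ C ∈ (D.blocksThrough p).erase B, #(B.erase p ∩ C) := (sum_card_inter h_point).symm
    _ = #((D.blocksThrough p).erase B) * (y - 1) := sum_const_nat h_block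
    _ = (#(D.blocksThrough p) - 1) * (y - 1) := by rw [card_erase_of_mem hBp]

theorem mul_lam_le_of_disjoint (h : QuasiSymmetricZero D.blocks y) (hB : B ∈ D.blocks)
    (hC : C ∈ D.blocks) (hBC : Disjoint B C) (hp : p ∈ B) :
    k * lam ≤ (#(D.blocksThrough p) - 1) * y := by
  have hpC : p ∉ C := disjoint_left.1 hBC hp
  have hBp : B ∈ D.blocksThrough p := D.mem_blocksThrough.2 ⟨hB, hp⟩
  calc k * lam = ∑ X ∈ D.blocksThrough p, #(C ∩ X) := by
        rw [D.sum_card_inter_blocksThrough hpC, D.block_card C hC]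
    _ = ∑ X ∈ (D.blocksThrough p).erase B, #(C ∩ X) :=
        (sum_erase _ (by rw [disjoint_iff_inter_eq_empty.1 hBC.symm, card_empty])).symm
    _ ≤ #((D.blocksThrough p).erase B) * y := sum_le_card_nsmul _ _ y fun X hX => by
        obtain ⟨hX, hpX⟩ := D.mem_blocksThrough.1 (mem_of_mem_erase hX)
        exact h.card_inter_le hC hX (ne_of_mem_of_not_mem' hpX hpC).symm
    _ = (#(D.blocksThrough p) - 1) * y := by rw [card_erase_of_mem hBp]

theorem lt_lam (h : QuasiSymmetricZero D.blocks y) (hy : 1 < y) : y < lam := by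
  have hk : 0 < k := y.zero_le.trans_lt (h.lt_of_card_eq D.block_card)
  obtain ⟨B, hB, C, hC, hBC⟩ := h.exists_disjoint
  obtain ⟨p, hp⟩ : B.Nonempty := card_pos.1 (by rwa [D.block_card B hB])
  have h_eq := D.pred_mul_pred_eq h hB hp
  have h_le := D.mul_lam_le_of_disjoint h hB hC hBC hp
  generalize #(D.blocksThrough p) - 1 = m at h_eq h_le
  zify [D.lam_pos, hk, hy.le] at h_eq h_le ⊢
  exact lt_of_mul_le_of_pred_mul_pred_eq (mod_cast hk) (mod_cast D.lam_pos) (mod_cast hy) h_eq h_le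

end TwoDesign

/-- For a non-trivial quasi-symmetric 2-(v,k,λ) design with intersection
numbers `0` and `y ≥ 2`: `b ≤ v(v−1)/k`, `r ≤ v−1` and `y < λ ≤ k−1`. -/
theorem stmt_6 {P : Type*} [Fintype P] [DecidableEq P] {v k lam r b y : ℕ}
    (D : TwoDesign P v k lam)
    (hnt : 2 < k ∧ k < v - 1)
    (hr : ∀ p : P, (D.blocks.filter fun B => p ∈ B).card = r)
    (hb : D.blocks.card = b)
    (hy : 2 ≤ y)
    (hqs : QuasiSymmetricZero D.blocks y) :
    (b : ℚ) ≤ (v : ℚ) * ((v : ℚ) - 1) / (k : ℚ) ∧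
      r ≤ v - 1 ∧ y < lam ∧ lam ≤ k - 1 := by
  obtain ⟨hk, hkv⟩ := hnt
  obtain ⟨p⟩ : Nonempty P := Fintype.card_pos_iff.1 (by rw [D.card_points]; lia)
  have h_rep : ∀ p, (D.blocksThrough p).card ≤ v - 1 :=
    D.card_blocksThrough_le hqs (Nat.zero_lt_of_lt hy)
  have h_blocks : b * k ≤ v * (v - 1) := hb ▸ D.card_blocks_mul_le h_rep
  refine ⟨?_, hr p ▸ h_rep p, D.lt_lam hqs hy, D.lam_le_pred (by lia) (h_rep p)⟩
  rw [le_div_iff₀ (by exact_mod_cast Nat.zero_lt_of_lt hk), ← Nat.cast_pred (by lia)]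
  exact_mod_cast h_blocks
end

section
/- Let D be a non-trivial quasi-symmetric 2-(v,k,λ) design with block intersection numbers x = 0 and y ≥ 2, with replication number r. Then (y−1)·r²/λ² < v − 1 < 2(y−1)·r²/λ²; in particular v ≤ 2(y−1)·(r/gcd(r,λ))². -/
lemma le_div_gcd_mul (a : ℕ) {b : ℕ} (hb : 0 < b) : a ≤ a / a.gcd b * b :=
  calc
    a = a / a.gcd b * a.gcd b := (Nat.div_mul_cancel (Nat.gcd_dvd_left a b)).symm
    _ ≤ a / a.gcd b * b := Nat.mul_le_mul_left _ (Nat.gcd_le_right a hb)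

namespace TwoDesign

open Finset

variable {P : Type*} [Fintype P] [DecidableEq P] {v k lam r y : ℕ} (D : TwoDesign P v k lam)
  {p : P} {B : Finset P}

lemma sum_card_inter {S : Finset P} (hpS : p ∉ S) :
    ∑ C ∈ D.blocks with p ∈ C, #(S ∩ C) = #S * lam :=
  Finset.sum_card_inter fun q hq => by
    rw [filter_filter]
    exact D.pair_blocks p q (ne_of_mem_of_not_mem hq hpS).symm

lemma replication_mul_pred (hr : #{C ∈ D.blocks | p ∈ C} = r) :
    r * (k - 1) = (v - 1) * lam := by
  have hcard : ∀ C ∈ D.blocks.filter (p ∈ ·), #(univ.erase p ∩ C) = k - 1 := fun C hC => by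
    obtain ⟨hC, hpC⟩ := mem_filter.1 hC
    rw [erase_inter, univ_inter, card_erase_of_mem hpC, D.block_card C hC]
  rw [← hr, ← sum_const_nat hcard, D.sum_card_inter (notMem_erase p univ),
    card_erase_of_mem (mem_univ p), card_univ, D.card_points]

lemma lam_lt_replication (hk : 0 < k) (hkv : k < v) (hr : #{C ∈ D.blocks | p ∈ C} = r) :
    lam < r := by
  refine lt_of_mul_lt_mul_right (a := k - 1) ?_ (Nat.zero_le _)
  calc
    lam * (k - 1) < lam * (v - 1) := Nat.mul_lt_mul_of_pos_left (by omega) D.lam_pos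
    _ = r * (k - 1) := by rw [D.replication_mul_pred hr, mul_comm]

lemma card_inter_lt {C : Finset P} (hB : B ∈ D.blocks) (hC : C ∈ D.blocks) (hCB : C ≠ B) :
    #(B ∩ C) < k := by
  rw [← D.block_card B hB]
  refine card_lt_card (inter_subset_left.ssubset_of_ne fun h => hCB.symm ?_)
  exact eq_of_subset_of_card_le (inter_eq_left.1 h) (by rw [D.block_card B hB, D.block_card C hC])

lemma pred_add_mul_pred (hB : B ∈ D.blocks) (hp : p ∈ B)
    (hr : #{C ∈ D.blocks | p ∈ C} = r)
    (hinter : ∀ C ∈ D.blocks, p ∈ C → C ≠ B → #(B ∩ C) = y) :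
    (k - 1) + (r - 1) * (y - 1) = (k - 1) * lam := by
  have hBp : B ∈ D.blocks.filter (p ∈ ·) := mem_filter.2 ⟨hB, hp⟩
  have hcard : ∀ C ∈ (D.blocks.filter (p ∈ ·)).erase B, #(B.erase p ∩ C) = y - 1 := fun C hC => by
    obtain ⟨hCB, hC⟩ := mem_erase.1 hC
    obtain ⟨hC, hpC⟩ := mem_filter.1 hC
    rw [erase_inter, card_erase_of_mem (mem_inter.2 ⟨hp, hpC⟩), hinter C hC hpC hCB]
  have hk : #(B.erase p) = k - 1 := by rw [card_erase_of_mem hp, D.block_card B hB]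
  rw [← hk, ← D.sum_card_inter (notMem_erase p B), ← add_sum_erase _ _ hBp, sum_const_nat hcard,
    card_erase_of_mem hBp, hr, inter_eq_left.2 (erase_subset p B)]

lemma pred_mul_replication_lt (hB : B ∈ D.blocks) (hp : p ∈ B)
    (hr : #{C ∈ D.blocks | p ∈ C} = r)
    (hinter : ∀ C ∈ D.blocks, p ∈ C → C ≠ B → #(B ∩ C) = y) (h1r : 1 < r) :
    (y - 1) * r < (k - 1) * lam := by
  obtain ⟨C, hC, hCB⟩ := exists_mem_ne (h1r.trans_eq hr.symm) B
  obtain ⟨hC, hpC⟩ := mem_filter.1 hC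
  have hyk : y < k := hinter C hC hpC hCB ▸ D.card_inter_lt hB hC hCB
  have hy : 0 < y := hinter C hC hpC hCB ▸ card_pos.2 ⟨p, mem_inter.2 ⟨hp, hpC⟩⟩
  calc
    (y - 1) * r = (y - 1) + (r - 1) * (y - 1) := by
      rw [add_comm, ← Nat.add_one_mul, Nat.sub_add_cancel h1r.le, mul_comm]
    _ < (k - 1) + (r - 1) * (y - 1) := by gcongr
    _ = (k - 1) * lam := D.pred_add_mul_pred hB hp hr hinter

lemma pred_mul_lam_lt (hB : B ∈ D.blocks) (hp : p ∈ B)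
    (hr : #{C ∈ D.blocks | p ∈ C} = r)
    (hinter : ∀ C ∈ D.blocks, p ∈ C → C ≠ B → #(B ∩ C) = y) (h1r : 1 < r) (hy : 2 ≤ y) :
    (k - 1) * lam < 2 * (y - 1) * r := by
  have hid := D.pred_add_mul_pred hB hp hr hinter
  have hlam : 2 ≤ lam := by
    have hpos : 0 < (r - 1) * (y - 1) := Nat.mul_pos (by omega) (by omega)
    by_contra! hlt
    obtain rfl : lam = 1 := by have := D.lam_pos; omega
    omega
  calc
    (k - 1) * lam ≤ 2 * ((r - 1) * (y - 1)) := by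
      have : (k - 1) * 2 ≤ (k - 1) * lam := Nat.mul_le_mul_left _ hlam
      omega
    _ < 2 * (r * (y - 1)) := by gcongr <;> omega
    _ = 2 * (y - 1) * r := by ring

end TwoDesign

theorem stmt_9_general {P : Type*} [Fintype P] [DecidableEq P] {v k lam r y : ℕ}
    (D : TwoDesign P v k lam) (hkv : k < v) {p : P} {B : Finset P} (hB : B ∈ D.blocks)
    (hp : p ∈ B) (hr : (D.blocks.filter fun C => p ∈ C).card = r) (hy : 2 ≤ y)
    (hinter : ∀ C ∈ D.blocks, p ∈ C → C ≠ B → (B ∩ C).card = y) :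
    (((y : ℚ) - 1) * (r : ℚ) ^ 2 / (lam : ℚ) ^ 2 < (v : ℚ) - 1 ∧
      (v : ℚ) - 1 < 2 * ((y : ℚ) - 1) * (r : ℚ) ^ 2 / (lam : ℚ) ^ 2) ∧
    v ≤ 2 * (y - 1) * (r / Nat.gcd r lam) ^ 2 := by
  have hlam := D.lam_pos
  have hk : 0 < k := D.block_card B hB ▸ Finset.card_pos.2 ⟨p, hp⟩
  have h1r : 1 < r := Nat.lt_of_le_of_lt hlam (D.lam_lt_replication hk hkv hr)
  have hv : (v - 1) * lam ^ 2 = (k - 1) * lam * r := by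
    linear_combination lam * (D.replication_mul_pred hr).symm
  have hlower : (y - 1) * r ^ 2 < (v - 1) * lam ^ 2 := by
    rw [hv, sq, ← mul_assoc]
    exact Nat.mul_lt_mul_of_pos_right (D.pred_mul_replication_lt hB hp hr hinter h1r) (by omega)
  have hupper : (v - 1) * lam ^ 2 < 2 * (y - 1) * r ^ 2 := by
    rw [hv, sq, ← mul_assoc]
    exact Nat.mul_lt_mul_of_pos_right (D.pred_mul_lam_lt hB hp hr hinter h1r hy) (by omega)
  refine ⟨?_, ?_⟩
  · rw [← Nat.cast_pred (by omega : 0 < v), ← Nat.cast_pred (by omega : 0 < y),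
      div_lt_iff₀ (by positivity), lt_div_iff₀ (by positivity)]
    exact ⟨mod_cast hlower, mod_cast hupper⟩
  · have : v - 1 < 2 * (y - 1) * (r / r.gcd lam) ^ 2 := by
      refine lt_of_mul_lt_mul_right (a := lam ^ 2) (hupper.trans_le ?_) (Nat.zero_le _)
      rw [mul_assoc _ (_ ^ 2), ← mul_pow]
      gcongr
      exact le_div_gcd_mul r hlam
    omega

/-- For a non-trivial quasi-symmetric 2-(v,k,λ) design with intersection
numbers `0` and `y ≥ 2`: `(y−1)·r²/λ² < v − 1 < 2(y−1)·r²/λ²`; in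
particular `v ≤ 2(y−1)·(r/gcd(r,λ))²`. -/
theorem stmt_9 {P : Type*} [Fintype P] [DecidableEq P] {v k lam r y : ℕ}
    (D : TwoDesign P v k lam)
    (hnt : 2 < k ∧ k < v - 1)
    (hr : ∀ p : P, (D.blocks.filter fun B => p ∈ B).card = r)
    (hy : 2 ≤ y)
    (hqs : QuasiSymmetricZero D.blocks y) :
    (((y : ℚ) - 1) * (r : ℚ) ^ 2 / (lam : ℚ) ^ 2 < (v : ℚ) - 1 ∧
      (v : ℚ) - 1 < 2 * ((y : ℚ) - 1) * (r : ℚ) ^ 2 / (lam : ℚ) ^ 2) ∧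
    v ≤ 2 * (y - 1) * (r / Nat.gcd r lam) ^ 2 := by
  obtain ⟨hinter, ⟨B, hB, -⟩, -⟩ := hqs
  obtain ⟨p, hp⟩ : B.Nonempty := Finset.card_pos.1 (by have := D.block_card B hB; omega)
  exact stmt_9_general D (by omega) hB hp (hr p) hy fun C hC hpC hCB =>
    (hinter B hB C hC hCB.symm).resolve_left
      (Finset.card_ne_zero_of_mem (Finset.mem_inter.2 ⟨hp, hpC⟩))
end
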